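/- Let N ≥ 3 and let t > max{N, 2N/(N−2)}. Then there exists a constant C(t) > 0 such that every φ ∈ X satisfies ‖φ‖_∞ ≤ C(t) ‖∇φ‖_{L²(ℝ^N)}^{2/t} (1 + ‖∇φ‖_{L²(ℝ^N)}^{2/N}), where ‖φ‖_∞ = sup_{x∈ℝ^N} |φ(x)|. -/

import Mathlib

open MeasureTheory Metric Set Filter Topology

noncomputable section

abbrev Euc (N : ℕ) := EuclideanSpace ℝ (Fin N)

/-- The set `X` of admissible potentials: Lipschitz with constant 1, vanishing at
infinity, with square-integrable (a.e.-defined) gradient. -/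
def memX (N : ℕ) (φ : Euc N → ℝ) : Prop :=
  LipschitzWith 1 φ ∧ Tendsto φ (cocompact (Euc N)) (𝓝 0) ∧
    Integrable (fun x => ‖gradient φ x‖ ^ 2) (volume : Measure (Euc N))

/-- The `L²`-norm of the gradient. -/
def gradNorm2 (N : ℕ) (φ : Euc N → ℝ) : ℝ :=
  (∫ x, ‖gradient φ x‖ ^ 2) ^ (1 / 2 : ℝ)

open scoped ENNReal NNReal

lemma aux_ofReal_integral_le {α : Type*} [MeasurableSpace α] {μ : Measure α} {h : α → ℝ}
    (hi : Integrable h μ) :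
    ENNReal.ofReal (∫ x, h x ∂μ) ≤ ∫⁻ x, ENNReal.ofReal (h x) ∂μ := by
  have h1 : ∫ x, h x ∂μ ≤ ∫ x, max (h x) 0 ∂μ :=
    integral_mono hi hi.pos_part (fun x => le_max_left _ _)
  refine (ENNReal.ofReal_le_ofReal h1).trans ?_
  rw [ofReal_integral_eq_lintegral_ofReal hi.pos_part
    (Eventually.of_forall fun x => le_max_right _ _)]
  refine lintegral_mono fun x => ?_
  rcases le_total (h x) 0 with hx | hx <;> simp [hx]

/-- One-dimensional estimate along a ray. -/
lemma aux_ray (n : ℕ) (hn : 2 ≤ n) (f : ℝ → ℝ) (hf : LipschitzWith 1 f) (a : ℝ) (ha : 0 < a)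
    (hfa : a ≤ |f a|) (hlim : Tendsto f atTop (𝓝 0)) :
    ENNReal.ofReal (a ^ (n + 1) / 2) ≤
      ∫⁻ r in Ioi (0 : ℝ), ENNReal.ofReal (r ^ n) * ENNReal.ofReal (deriv f r ^ 2) := by
  obtain ⟨R, hR1, hR2⟩ : ∃ R, |f R| < a / 4 ∧ a < R := by
    have h1 : ∀ᶠ R in atTop, |f R| < a / 4 := by
      have := (hlim.abs)
      rw [abs_zero] at this
      exact this.eventually_lt_const (by positivity)
    exact (h1.and (eventually_gt_atTop a)).exists
  have hac : AbsolutelyContinuousOnInterval f a R :=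
    (hf.lipschitzOnWith (s := uIcc a R)).absolutelyContinuousOnInterval
  have hint := hac.intervalIntegrable_deriv
  have hftc := hac.integral_deriv_eq_sub
  obtain ⟨s, hs, hsa⟩ : ∃ s : ℝ, s ^ 2 = 1 ∧ 3 * a / 4 ≤ s * (f R - f a) := by
    rcases abs_cases (f a) with h | h
    · refine ⟨-1, by norm_num, ?_⟩
      have := abs_lt.1 hR1
      linarith [this.1, this.2]
    · refine ⟨1, by norm_num, ?_⟩
      have := abs_lt.1 hR1
      linarith [this.1, this.2]
  have h0 : (0 : ℝ) ∉ uIcc a R := by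
    rw [uIcc_of_le hR2.le]; intro h; exact absurd h.1 (not_le.2 ha)
  have hz : ∫ x in a..R, x ^ (-2 : ℤ) = 1 / a - 1 / R := by
    rw [integral_zpow (Or.inr ⟨by norm_num, h0⟩)]
    norm_num [zpow_neg]
    ring
  have hzi : IntervalIntegrable (fun x : ℝ => x ^ (-2 : ℤ)) volume a R :=
    intervalIntegral.intervalIntegrable_zpow (Or.inr h0)
  set h : ℝ → ℝ := fun r =>
    a ^ (n - 2) * (2 * (a ^ 2 * s) * deriv f r - a ^ 4 * r ^ (-2 : ℤ)) with hh
  have hhi : IntervalIntegrable h volume a R :=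
    ((hint.const_mul _).sub (hzi.const_mul _)).const_mul _
  have hval : ∫ r in a..R, h r =
      a ^ (n - 2) * (2 * (a ^ 2 * s) * (f R - f a) - a ^ 4 * (1 / a - 1 / R)) := by
    rw [hh, intervalIntegral.integral_const_mul, intervalIntegral.integral_sub
      (hint.const_mul _) (hzi.const_mul _), intervalIntegral.integral_const_mul,
      intervalIntegral.integral_const_mul, hftc, hz]
  have hlow : a ^ (n + 1) / 2 ≤ ∫ r in a..R, h r := by
    rw [hval]
    have e : a ^ (n + 1) / 2 = a ^ (n - 2) * (a ^ 3 / 2) := by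
      rw [show n + 1 = (n - 2) + 3 by omega, pow_add]; ring
    rw [e]
    gcongr
    have e1 : a ^ 4 * (1 / a - 1 / R) = a ^ 3 - a ^ 4 / R := by field_simp
    have e2 : 0 ≤ a ^ 4 / R := by have := ha.trans hR2; positivity
    have e3 : a ^ 2 * (3 * a / 4) ≤ a ^ 2 * (s * (f R - f a)) := by gcongr
    rw [e1]
    nlinarith
  refine (ENNReal.ofReal_le_ofReal hlow).trans ?_
  rw [intervalIntegral.integral_of_le hR2.le]
  refine (aux_ofReal_integral_le
    ((intervalIntegrable_iff_integrableOn_Ioc_of_le hR2.le).1 hhi)).trans ?_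
  refine le_trans ?_ (lintegral_mono_set (s := Ioc a R) (fun r hr => ha.trans hr.1))
  refine setLIntegral_mono' measurableSet_Ioc fun r hr => ?_
  have hr0 : 0 < r := ha.trans hr.1
  rw [← ENNReal.ofReal_mul (by positivity)]
  refine ENNReal.ofReal_le_ofReal ?_
  have k1 : a ^ (n - 2) * (r ^ 2 * deriv f r ^ 2) ≤ r ^ n * deriv f r ^ 2 := by
    have : r ^ n = r ^ (n - 2) * r ^ 2 := by rw [← pow_add]; congr 1; omega
    rw [this, ← mul_assoc]
    have := hr.1.le
    gcongr
  refine le_trans ?_ k1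
  simp only [hh]
  gcongr
  rw [zpow_neg]
  norm_cast
  have k2 : r ^ 2 * deriv f r ^ 2 - (2 * (a ^ 2 * s) * deriv f r - a ^ 4 * (r ^ 2)⁻¹)
      = (r * deriv f r - a ^ 2 * s / r) ^ 2 + a ^ 4 * (r ^ 2)⁻¹ * (1 - s ^ 2) := by
    field_simp
    ring
  rw [hs] at k2
  nlinarith [sq_nonneg (r * deriv f r - a ^ 2 * s / r)]

lemma aux_polar {E : Type*} [NormedAddCommGroup E] [NormedSpace ℝ E] [FiniteDimensional ℝ E]
    [Nontrivial E] [MeasurableSpace E] [BorelSpace E] (μ : Measure E) [μ.IsAddHaarMeasure]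
    (F : E → ℝ≥0∞) (hF : Measurable F) :
    ∫⁻ x, F x ∂μ = ∫⁻ w : sphere (0 : E) 1, (∫⁻ r in Ioi (0 : ℝ),
      ENNReal.ofReal (r ^ (Module.finrank ℝ E - 1)) * F (r • (w : E))) ∂μ.toSphere := by
  have h1 : ∫⁻ x, F x ∂μ = ∫⁻ x : ({(0 : E)}ᶜ : Set E), F x ∂(μ.comap (↑)) := by
    rw [lintegral_subtype_comap (measurableSet_singleton _).compl, restrict_compl_singleton]
  have hG : Measurable (fun p : sphere (0 : E) 1 × Ioi (0 : ℝ) => F ((p.2 : ℝ) • (p.1 : E))) := by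
    apply hF.comp
    fun_prop
  have h2 := μ.measurePreserving_homeomorphUnitSphereProd.lintegral_comp hG
  rw [h1]
  have h3 : ∀ x : ({(0 : E)}ᶜ : Set E), F (((homeomorphUnitSphereProd E x).2 : ℝ) •
      ((homeomorphUnitSphereProd E x).1 : E)) = F x := by
    intro x
    congr 1
    have hx : ‖(x : E)‖ ≠ 0 := norm_ne_zero_iff.2 x.2
    simp [smul_smul, hx]
  simp only [h3] at h2
  rw [h2, lintegral_prod _ hG.aemeasurable]
  refine lintegral_congr fun w => ?_
  rw [Measure.volumeIoiPow, lintegral_withDensity_eq_lintegral_mul]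
  · simp only [Pi.mul_apply]
    rw [lintegral_subtype_comap measurableSet_Ioi
      (fun r : ℝ => ENNReal.ofReal (r ^ (Module.finrank ℝ E - 1)) * F (r • (w : E)))]
  · fun_prop
  · exact hG.comp measurable_prodMk_left

lemma aux_main (N : ℕ) (hN : 3 ≤ N) (φ : Euc N → ℝ) (hφ : memX N φ) (x : Euc N) :
    (|φ x| / 2) ^ N / 2 * (volume : Measure (Euc N)).toSphere.real univ ≤
      ∫ y, ‖gradient φ y‖ ^ 2 := by
  classical
  obtain ⟨hL, hlim, hint⟩ := hφ
  have : Nonempty (Fin N) := ⟨⟨0, by omega⟩⟩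
  have : Nontrivial (Euc N) := inferInstance
  have hnn : 0 ≤ ∫ y, ‖gradient φ y‖ ^ 2 := integral_nonneg fun _ => by positivity
  rcases eq_or_ne (φ x) 0 with h0 | h0
  · rw [h0]; simpa [show N ≠ 0 by omega] using hnn
  set a := |φ x| / 2 with ha
  have ha0 : 0 < a := by have := abs_pos.2 h0; positivity
  set F : Euc N → ℝ≥0∞ := fun y =>
    if DifferentiableAt ℝ φ y then ENNReal.ofReal (‖fderiv ℝ φ y‖ ^ 2) else ∞ with hFdef
  have hF : Measurable F := by
    refine Measurable.ite (measurableSet_of_differentiableAt ℝ φ) ?_ measurable_const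
    exact ((measurable_fderiv ℝ φ).norm.pow_const 2).ennreal_ofReal
  have hg : ∀ y, ‖gradient φ y‖ = ‖fderiv ℝ φ y‖ := fun y => by
    rw [gradient, LinearIsometryEquiv.norm_map]
  have hI : ENNReal.ofReal (∫ y, ‖gradient φ y‖ ^ 2) = ∫⁻ y, F (x + y) := by
    rw [ofReal_integral_eq_lintegral_ofReal hint (Eventually.of_forall fun _ => by positivity),
      lintegral_add_left_eq_self]
    refine lintegral_congr_ae ?_
    filter_upwards [hL.ae_differentiableAt (μ := volume)] with y hy
    simp [hFdef, hy, hg]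
  have hray : ∀ w : sphere (0 : Euc N) 1, ENNReal.ofReal (a ^ N / 2) ≤ ∫⁻ r in Ioi (0 : ℝ),
      ENNReal.ofReal (r ^ (Module.finrank ℝ (Euc N) - 1)) * F (x + r • (w : Euc N)) := by
    intro w
    have hw : ‖(w : Euc N)‖ = 1 := by simp
    have hline : LipschitzWith 1 (fun r : ℝ => x + r • (w : Euc N)) := by
      refine LipschitzWith.of_dist_le_mul fun r s => ?_
      rw [dist_add_left, dist_eq_norm, ← sub_smul, norm_smul, hw, dist_eq_norm]
      simp
    have hfL : LipschitzWith 1 (fun r : ℝ => φ (x + r • (w : Euc N))) := by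
      simpa [Function.comp_def] using hL.comp hline
    have hfa : a ≤ |φ (x + a • (w : Euc N))| := by
      have h1 := hL.dist_le_mul x (x + a • (w : Euc N))
      rw [dist_self_add_right, norm_smul, hw, Real.dist_eq, Real.norm_of_nonneg ha0.le] at h1
      have h2 := abs_sub_abs_le_abs_sub (φ x) (φ (x + a • (w : Euc N)))
      simp at h1
      linarith
    have hfl : Tendsto (fun r : ℝ => φ (x + r • (w : Euc N))) atTop (𝓝 0) := by
      refine hlim.comp ?_
      rw [← Metric.cobounded_eq_cocompact, ← tendsto_norm_atTop_iff_cobounded]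
      refine tendsto_atTop_mono' atTop ?_ (tendsto_atTop_add_const_right atTop (-‖x‖) tendsto_id)
      filter_upwards [eventually_ge_atTop 0] with r hr
      have h1 := norm_sub_norm_le (r • (w : Euc N)) (-x)
      rw [norm_smul, hw, norm_neg, sub_neg_eq_add, add_comm _ x, Real.norm_of_nonneg hr] at h1
      simp only [id]
      linarith
    have := aux_ray (N - 1) (by omega) _ hfL a ha0 hfa hfl
    rw [show N - 1 + 1 = N by omega] at this
    refine this.trans ?_
    rw [finrank_euclideanSpace_fin]
    refine lintegral_mono fun r => ?_
    dsimp only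
    gcongr
    simp only [hFdef]
    split_ifs with hd
    · refine ENNReal.ofReal_le_ofReal ?_
      have hd1 : HasDerivAt (fun r : ℝ => x + r • (w : Euc N)) (w : Euc N) r := by
        simpa using ((hasDerivAt_id r).smul_const (w : Euc N)).const_add x
      have hd2 := hd.hasFDerivAt.comp_hasDerivAt r hd1
      have hd3 : deriv (fun r : ℝ => φ (x + r • (w : Euc N))) r =
        fderiv ℝ φ (x + r • (w : Euc N)) w := hd2.deriv
      rw [hd3, ← sq_abs]
      have := (fderiv ℝ φ (x + r • (w : Euc N))).le_opNorm (w : Euc N)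
      rw [hw, mul_one, Real.norm_eq_abs] at this
      gcongr
    · exact le_top
  have hfin : ENNReal.ofReal (a ^ N / 2) * (volume : Measure (Euc N)).toSphere univ ≤
      ENNReal.ofReal (∫ y, ‖gradient φ y‖ ^ 2) := by
    rw [hI, aux_polar volume (fun y => F (x + y)) (hF.comp (measurable_const_add x)),
      ← lintegral_const]
    exact lintegral_mono hray
  have := ENNReal.toReal_mono ENNReal.ofReal_ne_top hfin
  rw [ENNReal.toReal_mul, ENNReal.toReal_ofReal (by positivity), ENNReal.toReal_ofReal hnn] at this
  exact this

/-- For `N ≥ 3` and `t > max{N, 2N/(N−2)}` there is a constant `C(t) > 0` such that every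
`φ ∈ X` satisfies `‖φ‖_∞ ≤ C(t) ‖∇φ‖₂^{2/t} (1 + ‖∇φ‖₂^{2/N})`. -/
theorem stmt_1 (N : ℕ) (hN : 3 ≤ N) (t : ℝ)
    (ht : max (N : ℝ) (2 * N / ((N : ℝ) - 2)) < t) :
    ∃ C : ℝ, 0 < C ∧ ∀ φ : Euc N → ℝ, memX N φ → ∀ x : Euc N,
      |φ x| ≤ C * gradNorm2 N φ ^ (2 / t) * (1 + gradNorm2 N φ ^ (2 / (N : ℝ))) := by
  have : Nonempty (Fin N) := ⟨⟨0, by omega⟩⟩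
  have : Nontrivial (Euc N) := inferInstance
  set S := (volume : Measure (Euc N)).toSphere.real univ with hS
  have hS0 : 0 < S := by
    refine ENNReal.toReal_pos ?_ (measure_ne_top _ _)
    rw [Ne, Measure.measure_univ_eq_zero]
    exact Measure.toSphere_ne_zero _
  have hNt : (N : ℝ) < t := (le_max_left _ _).trans_lt ht
  have hN0 : (0 : ℝ) < N := by exact_mod_cast (by omega : 0 < N)
  refine ⟨2 * (2 / S) ^ (1 / (N : ℝ)), by positivity, fun φ hφ x => ?_⟩
  have hmain := aux_main N hN φ hφ x
  rw [← hS] at hmain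
  set I := ∫ y, ‖gradient φ y‖ ^ 2 with hI
  have hI0 : 0 ≤ I := integral_nonneg fun _ => by positivity
  have hG : gradNorm2 N φ = I ^ (1 / 2 : ℝ) := rfl
  set G := gradNorm2 N φ
  have hG0 : 0 ≤ G := by rw [hG]; positivity
  have hIG : I ^ (1 / (N : ℝ)) = G ^ (2 / (N : ℝ)) := by
    rw [hG, ← Real.rpow_mul hI0]; congr 1; field_simp
  have h1 : (|φ x| / 2) ^ N ≤ 2 / S * I := by
    rw [div_mul_eq_mul_div, le_div_iff₀ hS0]; linarith
  have h2 : |φ x| / 2 ≤ (2 / S) ^ (1 / (N : ℝ)) * G ^ (2 / (N : ℝ)) := by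
    rw [← hIG, ← Real.mul_rpow (by positivity) hI0]
    have := Real.rpow_le_rpow (by positivity) h1 (by positivity : 0 ≤ 1 / (N : ℝ))
    rwa [one_div, Real.pow_rpow_inv_natCast (by positivity) (by omega), ← one_div] at this
  have h3 : G ^ (2 / (N : ℝ)) ≤ G ^ (2 / t) * (1 + G ^ (2 / (N : ℝ))) := by
    have p1 : 0 ≤ G ^ (2 / (N : ℝ)) := by positivity
    have p2 : 0 ≤ G ^ (2 / t) := by positivity
    have ht0 : 0 < t := hN0.trans hNt
    rcases le_total G 1 with hG1 | hG1
    · have : G ^ (2 / (N : ℝ)) ≤ G ^ (2 / t) :=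
        Real.rpow_le_rpow_of_exponent_ge_of_imp hG0 hG1 (by gcongr) (by
          intro _ h; exfalso; have : 0 < 2 / (N : ℝ) := by positivity
          linarith)
      nlinarith
    · have : 1 ≤ G ^ (2 / t) := Real.one_le_rpow hG1 (by positivity)
      nlinarith
  calc |φ x| ≤ 2 * (2 / S) ^ (1 / (N : ℝ)) * G ^ (2 / (N : ℝ)) := by linarith
    _ ≤ 2 * (2 / S) ^ (1 / (N : ℝ)) * (G ^ (2 / t) * (1 + G ^ (2 / (N : ℝ)))) := by gcongr
    _ = _ := by ring
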